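/- arXiv:math/0602235 — 3 statements merged into one kernel-verified Lean document; each statement's English description precedes it below -/
import Mathlib

section
/- Let (A, m, k) be a noetherian commutative local ring and C an A-module (not necessarily finitely generated) with mC ≠ C. If Tor_1^A(C, k) = 0, then for every m-primary ideal I of A, the A/I-module C/IC is free and nonzero. -/
open CategoryTheory Limits IsLocalRing

/-- `Tor_n^A(C, D) = 0`. -/
def TorIsZero (A : Type) [CommRing A] (n : ℕ) (C D : Type)
    [AddCommGroup C] [Module A C] [AddCommGroup D] [Module A D] : Prop :=
  IsZero (((Tor (ModuleCat A) n).obj (ModuleCat.of A C)).obj (ModuleCat.of A D))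

/-!
Let `J` be an ideal with `C/JC` free over `A/J` and `Tor_1(C, A/J) = 0`, and let `J ^ n ≤ I ≤ J`.
Lift a basis of `C/JC` to a linear map `g : F → C` from a free module with `F/JF ≃ C/JC`. It is
onto modulo `I` because `J` is nilpotent modulo `I`. Write `K` for the preimage of `IC` in `F`; as
`K ≤ JF`, the vanishing of `Tor_1` gives `K ≤ JK + IF`, and nilpotency again gives `K = IF`.
Hence `F/IF ≃ C/IC`. For the maximal ideal of a local ring the freeness of `C/JC` is automatic.
-/

lemma lTensor_range_subtype_injective_of_exact {A C P₂ P₁ P₀ : Type*} [CommRing A]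
    [AddCommGroup C] [Module A C] [AddCommGroup P₂] [Module A P₂] [AddCommGroup P₁] [Module A P₁]
    [AddCommGroup P₀] [Module A P₀] {d₂ : P₂ →ₗ[A] P₁} {d₁ : P₁ →ₗ[A] P₀} (hd : d₁ ∘ₗ d₂ = 0)
    (hex : Function.Exact (d₂.lTensor C) (d₁.lTensor C)) :
    Function.Injective ((LinearMap.range d₁).subtype.lTensor C) := by
  rw [injective_iff_map_eq_zero]
  intro z hz
  obtain ⟨w, rfl⟩ := LinearMap.lTensor_surjective C d₁.surjective_rangeRestrict z
  rw [← LinearMap.lTensor_comp_apply] at hz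
  obtain ⟨v, rfl⟩ := (hex w).1 hz
  have hd' : d₁.rangeRestrict ∘ₗ d₂ = 0 := by
    ext x
    exact LinearMap.congr_fun hd x
  rw [← LinearMap.lTensor_comp_apply, hd', LinearMap.lTensor_zero, LinearMap.zero_apply]

section Tor

variable {A C D : Type} [CommRing A] [AddCommGroup C] [Module A C] [AddCommGroup D] [Module A D]

lemma TorIsZero.exists_projective_presentation (hTor : TorIsZero A 1 C D) :
    ∃ (P : Type) (_ : AddCommGroup P) (_ : Module A P) (_ : Module.Projective A P)
      (π : P →ₗ[A] D), Function.Surjective π ∧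
        Function.Injective ((LinearMap.ker π).subtype.lTensor C) := by
  let P := projectiveResolution (ModuleCat.of A D)
  let tensorC := (MonoidalCategory.tensoringLeft (ModuleCat A)).obj (ModuleCat.of A C)
  have hexactAt : ((tensorC.mapHomologicalComplex _).obj P.complex).ExactAt 1 := by
    rw [HomologicalComplex.exactAt_iff_isZero_homology]
    exact IsZero.of_iso hTor (P.isoLeftDerivedObj tensorC 1).symm
  rw [HomologicalComplex.exactAt_iff' _ 2 1 0 (by simp) (by simp)] at hexactAt
  have hex₁ : Function.Exact ((P.complex.d 2 1).hom.lTensor C) ((P.complex.d 1 0).hom.lTensor C) :=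
    (ShortComplex.ShortExact.moduleCat_exact_iff_function_exact _).1 hexactAt
  have hd : (P.complex.d 1 0).hom ∘ₗ (P.complex.d 2 1).hom = 0 := by
    rw [← ModuleCat.hom_comp, P.complex.d_comp_d, ModuleCat.hom_zero]
  have hex₀ : Function.Exact (P.complex.d 1 0).hom (P.π.f 0).hom :=
    (ShortComplex.ShortExact.moduleCat_exact_iff_function_exact _).1 P.exact₀
  refine ⟨P.complex.X 0, inferInstance, inferInstance,
    (IsProjective.iff_projective _).2 (P.projective 0), (P.π.f 0).hom,
    (ModuleCat.epi_iff_surjective _).1 inferInstance, ?_⟩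
  change Function.Injective ((LinearMap.ker (P.π.f 0).hom).subtype.lTensor C)
  rw [hex₀.linearMap_ker_eq]
  exact lTensor_range_subtype_injective_of_exact hd hex₁

lemma TorIsZero.lTensor_injective (hTor : TorIsZero A 1 C D)
    {L F : Type*} [AddCommGroup L] [Module A L] [AddCommGroup F] [Module A F]
    {i : L →ₗ[A] F} {p : F →ₗ[A] C} (hi : Function.Injective i) (hip : Function.Exact i p)
    (hp : Function.Surjective p) : Function.Injective (i.lTensor D) := by
  obtain ⟨P, _, _, _, π, hπ, hker⟩ := hTor.exists_projective_presentation
  exact lTensor_injective_of_exact_of_exact_of_rTensor_injective π.exact_subtype_ker_map hπ hip hp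
    ((LinearMap.lTensor_inj_iff_rTensor_inj _ _).1 hker)
    (Module.Flat.lTensor_preserves_injective_linearMap i hi)

end Tor

section Submodules

variable {A M : Type*} [CommRing A] [AddCommGroup M] [Module A M] {J : Ideal A}

lemma le_pow_smul_sup_of_le_smul_sup {N L : Submodule A M} (h : N ≤ J • N ⊔ L) (n : ℕ) :
    N ≤ J ^ n • N ⊔ L := by
  induction n with
  | zero => simp
  | succ n ih =>
    calc N ≤ J ^ n • N ⊔ L := ih
      _ ≤ J ^ n • (J • N ⊔ L) ⊔ L := sup_le_sup_right (smul_mono_right _ h) L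
      _ = J ^ (n + 1) • N ⊔ (J ^ n • L ⊔ L) := by
        rw [Submodule.smul_sup, pow_succ, mul_smul, sup_assoc]
      _ = J ^ (n + 1) • N ⊔ L := by
        rw [sup_eq_right.2 (Submodule.smul_le_right : J ^ n • L ≤ L)]

lemma inf_smul_top_le_of_lTensor_injective {N : Submodule A M}
    (hN : Function.Injective (N.subtype.lTensor (A ⧸ J))) : N ⊓ J • ⊤ ≤ J • N := by
  rintro x ⟨hxN, hxJ⟩
  have htmul : TensorProduct.mk A (A ⧸ J) N 1 ⟨x, hxN⟩ = 0 := by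
    apply (injective_iff_map_eq_zero _).1 hN
    rwa [SetLike.mem_coe, ← LinearMap.ker_tensorProductMk] at hxJ
  rw [← Submodule.mem_smul_top_iff J N ⟨x, hxN⟩, ← LinearMap.ker_tensorProductMk]
  exact htmul

end Submodules

section FreeQuotient

universe v

variable {A F : Type*} {C : Type v} [CommRing A]
  [AddCommGroup C] [Module A C] [AddCommGroup F] [Module A F]

lemma free_quotient_smul_top (I : Ideal A) [Module.Free A F] :
    Module.Free (A ⧸ I) (F ⧸ (I • ⊤ : Submodule A F)) :=
  .of_equiv ((TensorProduct.quotTensorEquivQuotSMul F I).extendScalarsOfSurjective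
    Ideal.Quotient.mk_surjective)

lemma free_quotient_smul_top_of_comap_eq {I : Ideal A} [Module.Free A F] {g : F →ₗ[A] C}
    (hcomap : (I • ⊤ : Submodule A C).comap g = I • ⊤) (hrange : LinearMap.range g ⊔ I • ⊤ = ⊤) :
    Module.Free (A ⧸ I) (C ⧸ (I • ⊤ : Submodule A C)) := by
  let q := (I • ⊤ : Submodule A C).mkQ ∘ₗ g
  have hker : I • ⊤ = LinearMap.ker q := by rw [LinearMap.ker_comp, Submodule.ker_mkQ, hcomap]
  have hq : Function.Surjective q := by
    rw [← LinearMap.range_eq_top, LinearMap.range_comp, Submodule.map_mkQ_eq_top, sup_comm, hrange]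
  have := free_quotient_smul_top (F := F) I
  exact .of_equiv ((Submodule.quotEquivOfEq _ _ hker ≪≫ₗ
    q.quotKerEquivOfSurjective hq).extendScalarsOfSurjective Ideal.Quotient.mk_surjective)

lemma exists_linearMap_comap_smul_top_eq (J : Ideal A)
    [Module.Free (A ⧸ J) (C ⧸ (J • ⊤ : Submodule A C))] :
    ∃ (ι : Type v) (g : (ι →₀ A) →ₗ[A] C),
      (J • ⊤ : Submodule A C).comap g = J • ⊤ ∧ LinearMap.range g ⊔ J • ⊤ = ⊤ := by
  let b := (Module.Free.chooseBasis (A ⧸ J) (C ⧸ (J • ⊤ : Submodule A C))).repr.restrictScalars A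
  let q := b.symm.toLinearMap ∘ₗ Finsupp.mapRange.linearMap J.mkQ
  have hker : LinearMap.ker q = J • ⊤ := by
    rw [LinearEquiv.ker_comp, Finsupp.ker_mapRange, Submodule.ker_mkQ]
    simpa using Finsupp.submodule_smul _ _ (fun _ ↦ (⊤ : Ideal A)) J
  have hq : Function.Surjective q :=
    b.symm.surjective.comp (Finsupp.mapRange_surjective _ rfl J.mkQ_surjective)
  obtain ⟨g, hg⟩ := Module.projective_lifting_property _ q (Submodule.mkQ_surjective (J • ⊤))
  refine ⟨_, g, ?_, ?_⟩
  · rw [← hker, ← hg, LinearMap.ker_comp, Submodule.ker_mkQ]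
  · rw [sup_comm, ← Submodule.map_mkQ_eq_top, ← LinearMap.range_comp, hg]
    exact LinearMap.range_eq_top.2 hq

end FreeQuotient

section TorQuotient

variable {A C : Type} [CommRing A] [AddCommGroup C] [Module A C]
  {F : Type*} [AddCommGroup F] [Module A F] {I J : Ideal A}

lemma TorIsZero.ker_inf_smul_top_le (hTor : TorIsZero A 1 C (A ⧸ J)) {p : F →ₗ[A] C}
    (hp : Function.Surjective p) : LinearMap.ker p ⊓ J • ⊤ ≤ J • LinearMap.ker p :=
  inf_smul_top_le_of_lTensor_injective
    (hTor.lTensor_injective Subtype.val_injective p.exact_subtype_ker_map hp)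

lemma TorIsZero.comap_smul_top_inf_smul_top_le (hTor : TorIsZero A 1 C (A ⧸ J)) (hIJ : I ≤ J)
    {g : F →ₗ[A] C} (hg : LinearMap.range g ⊔ I • ⊤ = ⊤) :
    (I • ⊤ : Submodule A C).comap g ⊓ J • ⊤ ≤ J • (I • ⊤ : Submodule A C).comap g ⊔ I • ⊤ := by
  rintro x ⟨hxI, hxJ⟩
  let IC : Submodule A C := I • ⊤
  -- `p` extends `g` to a surjection whose kernel is the graph of `-g` over `IC.comap g`.
  let p : F × IC →ₗ[A] C := g.coprod IC.subtype
  have hp : LinearMap.range p = ⊤ := by rw [LinearMap.range_coprod, Submodule.range_subtype, hg]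
  obtain ⟨v, hv, hpv⟩ : g x ∈ (I • ⊤ : Submodule A (F × IC)).map p := by
    rwa [Submodule.map_smul'', Submodule.map_top, hp]
  have hxJ' : (x, 0) ∈ (J • ⊤ : Submodule A (F × IC)) :=
    Submodule.smul_top_le_comap_smul_top J (LinearMap.inl A F IC) hxJ
  have hdiff : (x, 0) - v ∈ J • LinearMap.ker p := by
    refine hTor.ker_inf_smul_top_le (LinearMap.range_eq_top.1 hp)
      ⟨?_, sub_mem hxJ' (Submodule.smul_mono_left hIJ hv)⟩
    rw [SetLike.mem_coe, LinearMap.mem_ker, map_sub, hpv]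
    simp [p]
  have hker : (LinearMap.ker p).map (LinearMap.fst A F IC) ≤ IC.comap g := by
    rintro _ ⟨⟨y, c⟩, hy : g y + c = 0, rfl⟩
    exact (eq_neg_of_add_eq_zero_left hy ▸ neg_mem c.2 : g y ∈ IC)
  have hsub : x - v.1 ∈ J • IC.comap g := by
    apply smul_mono_right J hker
    rw [← Submodule.map_smul'']
    exact ⟨_, hdiff, rfl⟩
  have hv₁ : v.1 ∈ (I • ⊤ : Submodule A F) :=
    Submodule.smul_top_le_comap_smul_top I (LinearMap.fst A F IC) hv
  rw [← sub_add_cancel x v.1]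
  exact Submodule.add_mem_sup hsub hv₁

end TorQuotient

theorem quotient_free_of_tor_vanishing_general
    (A : Type) [CommRing A] (C : Type) [AddCommGroup C] [Module A C] (J : Ideal A)
    [Module.Free (A ⧸ J) (C ⧸ J • (⊤ : Submodule A C))]
    (hJC : J • (⊤ : Submodule A C) ≠ ⊤) (hTor : TorIsZero A 1 C (A ⧸ J))
    (I : Ideal A) (hIJ : I ≤ J) (hJI : ∃ n : ℕ, J ^ n ≤ I) :
    Module.Free (A ⧸ I) (C ⧸ I • (⊤ : Submodule A C)) ∧
      Nontrivial (C ⧸ I • (⊤ : Submodule A C)) := by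
  obtain ⟨n, hn⟩ := hJI
  obtain ⟨ι, g, hcomapJ, hrangeJ⟩ := exists_linearMap_comap_smul_top_eq (C := C) J
  have hrange : LinearMap.range g ⊔ I • ⊤ = ⊤ := by
    rw [eq_top_iff, sup_comm]
    exact (le_pow_smul_sup_of_le_smul_sup (by rw [sup_comm, hrangeJ]) n).trans
      (sup_le_sup_right (Submodule.smul_mono_left hn) _)
  set K := (I • ⊤ : Submodule A C).comap g
  have hKJ : K ≤ J • ⊤ := hcomapJ ▸ Submodule.comap_mono (Submodule.smul_mono_left hIJ)
  have hK : K ≤ J • K ⊔ I • ⊤ := (le_inf le_rfl hKJ).trans <|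
    hTor.comap_smul_top_inf_smul_top_le hIJ hrange
  have hcomap : K = I • ⊤ := by
    refine le_antisymm ?_ (Submodule.smul_top_le_comap_smul_top I g)
    exact (le_pow_smul_sup_of_le_smul_sup hK n).trans
      (sup_le (Submodule.smul_mono hn le_top) le_rfl)
  refine ⟨free_quotient_smul_top_of_comap_eq hcomap hrange, Submodule.Quotient.nontrivial_iff.2 ?_⟩
  exact fun hIC ↦ hJC (top_le_iff.1 (hIC.ge.trans (Submodule.smul_mono_left hIJ)))

/-- If `(A, m, k)` is a noetherian local ring and `C` is an `A`-module with `mC ≠ C` and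
`Tor_1^A(C, k) = 0`, then for every `m`-primary ideal `I`, the `A/I`-module `C/IC` is
free and nonzero. -/
theorem quotient_free_of_tor_vanishing
    (A : Type) [CommRing A] [IsLocalRing A] [IsNoetherianRing A]
    (C : Type) [AddCommGroup C] [Module A C]
    (hmC : maximalIdeal A • (⊤ : Submodule A C) ≠ ⊤)
    (hTor : TorIsZero A 1 C (ResidueField A))
    (I : Ideal A) (hIm : I ≤ maximalIdeal A) (hmI : ∃ n : ℕ, maximalIdeal A ^ n ≤ I) :
    Module.Free (A ⧸ I) (C ⧸ I • (⊤ : Submodule A C)) ∧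
      Nontrivial (C ⧸ I • (⊤ : Submodule A C)) :=
  letI := Ideal.Quotient.field (maximalIdeal A)
  quotient_free_of_tor_vanishing_general A C (maximalIdeal A) hmC hTor I hIm hmI
end

section
/- Let (A, m, k) be a noetherian commutative local ring and C an A-module with mC ≠ C and Tor_1^A(C, k) = 0. Then for every ideal I of A, the conductor (IC :_A C) = {r ∈ A : rC ⊆ IC} equals I. -/
open CategoryTheory Limits IsLocalRing

/-!
Let `𝔪` be a maximal ideal with `Tor₁(C, A/𝔪) = 0`. Then `Tor₁(C, V) = 0` for every module `V`
killed by `𝔪`, since `V` is flat over the field `A/𝔪`; filtering by powers of `𝔪`, one finds that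
`J ⊗ C → C` is injective for every ideal `J` containing a power of `𝔪`. Now let `rC ⊆ IC` with `I`
containing a power of `𝔪`. Injectivity for `J = I + (r)` gives `(I : r)C = C`, and as `𝔪C ≠ C` this
forces `(I : r) = A`, that is `r ∈ I`. A general `I` closed in the `𝔪`-adic topology is the
intersection of the ideals `I + 𝔪ⁿ`.
-/

open Function TensorProduct

universe u

section Tensor

variable {R : Type*} [CommRing R]

theorem lTensor_subtype_range_injective_of_exact {C P₀ P₁ P₂ : Type*}
    [AddCommGroup C] [Module R C] [AddCommGroup P₀] [Module R P₀]
    [AddCommGroup P₁] [Module R P₁] [AddCommGroup P₂] [Module R P₂]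
    {d₁ : P₁ →ₗ[R] P₀} {d₂ : P₂ →ₗ[R] P₁} (hd : d₁ ∘ₗ d₂ = 0)
    (hC : Exact (d₂.lTensor C) (d₁.lTensor C)) :
    Injective (d₁.range.subtype.lTensor C) := by
  rw [injective_iff_map_eq_zero]
  intro x hx
  obtain ⟨y, rfl⟩ := d₁.rangeRestrict.lTensor_surjective C d₁.surjective_rangeRestrict x
  rw [← LinearMap.lTensor_comp_apply, LinearMap.subtype_comp_codRestrict] at hx
  obtain ⟨z, rfl⟩ := (hC y).1 hx
  have hd' : d₁.rangeRestrict ∘ₗ d₂ = 0 :=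
    LinearMap.ext fun p ↦ Subtype.ext (LinearMap.congr_fun hd p)
  rw [← LinearMap.lTensor_comp_apply, hd', LinearMap.lTensor_zero, LinearMap.zero_apply]

theorem lTensor_injective_of_flat_of_lTensor_algebra_injective {S V N Q : Type*}
    [CommRing S] [Algebra R S] [AddCommGroup V] [Module R V] [Module S V] [IsScalarTower R S V]
    [Module.Flat S V] [AddCommMonoid N] [Module R N] [AddCommMonoid Q] [Module R Q]
    {f : N →ₗ[R] Q} (hf : Injective (f.lTensor S)) : Injective (f.lTensor V) := by
  have hV : Injective ((f.baseChange S).lTensor V) :=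
    Module.Flat.lTensor_preserves_injective_linearMap _ hf
  have hcomm : f.lTensor V ∘ AlgebraTensorModule.cancelBaseChange R S S V N =
      AlgebraTensorModule.cancelBaseChange R S S V Q ∘ (f.baseChange S).lTensor V :=
    congrArg DFunLike.coe (AlgebraTensorModule.lTensor_comp_cancelBaseChange R S S f)
  rw [← EquivLike.injective_comp (AlgebraTensorModule.cancelBaseChange R S S V N), hcomm]
  exact (LinearEquiv.injective _).comp hV

theorem mem_smul_top_iff_one_tmul_mem_range {C : Type*} [AddCommGroup C] [Module R C]
    {I : Ideal R} {c : C} :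
    c ∈ I • (⊤ : Submodule R C) ↔ (1 : R) ⊗ₜ[R] c ∈ (I.subtype.rTensor C).range := by
  simp [← Ideal.subtype_rTensor_range, ← LinearEquiv.eq_symm_apply]

theorem mem_colon_singleton_smul_top_of_rTensor_injective {C : Type*} [AddCommGroup C] [Module R C]
    {I : Ideal R} {r : R} (hinj : Injective ((I ⊔ Ideal.span {r}).subtype.rTensor C)) {c : C}
    (hc : r • c ∈ I • (⊤ : Submodule R C)) : c ∈ I.colon {r} • (⊤ : Submodule R C) := by
  have hle : I ≤ I ⊔ Ideal.span {r} := le_sup_left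
  let s : ↥(I ⊔ Ideal.span {r}) := ⟨r, Ideal.mem_sup_right (Ideal.mem_span_singleton_self r)⟩
  let q := (Submodule.inclusion hle).range.mkQ
  let φ : R →ₗ[R] _ := q ∘ₗ LinearMap.toSpanSingleton R _ s
  have hφ : Exact (I.colon {r}).subtype φ := by
    intro a
    simp [φ, q, s, Submodule.mem_colon_singleton, Submodule.range_inclusion]
  have hφ' : Surjective φ := by
    intro y
    obtain ⟨⟨x, hx⟩, rfl⟩ := Submodule.mkQ_surjective _ y
    obtain ⟨y, hy, z, hz, rfl⟩ := Submodule.mem_sup.1 hx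
    obtain ⟨a, rfl⟩ := Ideal.mem_span_singleton'.1 hz
    refine ⟨a, (Submodule.Quotient.eq _).2 ?_⟩
    simpa [Submodule.range_inclusion, s] using hy
  rw [mem_smul_top_iff_one_tmul_mem_range] at hc ⊢
  obtain ⟨z, hz⟩ := hc
  have hs : (Submodule.inclusion hle).rTensor C z = s ⊗ₜ c := by
    apply hinj
    rw [← LinearMap.rTensor_comp_apply, Submodule.subtype_comp_inclusion, hz]
    simp only [s, LinearMap.rTensor_tmul, Submodule.subtype_apply, ← smul_tmul, smul_eq_mul,
      mul_one]
  refine (rTensor_exact C hφ hφ' _).1 ?_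
  calc φ.rTensor C (1 ⊗ₜ c) = q.rTensor C (s ⊗ₜ c) := by simp [φ]
    _ = 0 := by
      rw [← hs, ← LinearMap.rTensor_comp_apply,
        (LinearMap.exact_map_mkQ_range _).linearMap_comp_eq_zero]
      simp

end Tensor

section Tor

variable {R : Type u} [CommRing R]

theorem lTensor_ker_subtype_injective_of_isZero_tor {C K : Type u}
    [AddCommGroup C] [Module R C] [AddCommGroup K] [Module R K]
    (hTor : IsZero (((Tor (ModuleCat.{u} R) 1).obj (.of R C)).obj (.of R K)))
    {Q : Type*} [AddCommGroup Q] [Module R Q] [Module.Flat R Q]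
    {g : Q →ₗ[R] C} (hg : Surjective g) : Injective (g.ker.subtype.lTensor K) := by
  -- `Tor` resolves its second argument `K`; comparing the tensor product of the two presentations
  -- along rows and columns carries the vanishing over to the presentation of `C`.
  let P := projectiveResolution (ModuleCat.of R K)
  let F := (MonoidalCategory.tensoringLeft (ModuleCat R)).obj (ModuleCat.of R C)
  have hexact : ((F.mapHomologicalComplex _).obj P.complex).ExactAt 1 :=
    (HomologicalComplex.exactAt_iff_isZero_homology _ _).2
      (hTor.of_iso (P.isoLeftDerivedObj F 1).symm)
  rw [HomologicalComplex.exactAt_iff' _ 2 1 0 (by simp) (by simp),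
    ShortComplex.ShortExact.moduleCat_exact_iff_function_exact] at hexact
  have hd : (P.complex.d 1 0).hom ∘ₗ (P.complex.d 2 1).hom = 0 := by
    rw [← ModuleCat.hom_comp, P.complex.d_comp_d, ModuleCat.hom_zero]
  have hinj := lTensor_subtype_range_injective_of_exact hd hexact
  have hπ : Exact (P.complex.d 1 0).hom.range.subtype (P.π.f 0).hom := by
    have := (ShortComplex.ShortExact.moduleCat_exact_iff_function_exact _).1 P.exact₀
    rw [LinearMap.exact_iff] at this ⊢
    rwa [Submodule.range_subtype]
  have hπ' : Surjective (P.π.f 0).hom := (ModuleCat.epi_iff_surjective _).1 inferInstance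
  have : Module.Projective R (P.complex.X 0) := (IsProjective.iff_projective _).2 (P.projective 0)
  exact lTensor_injective_of_exact_of_exact_of_rTensor_injective hπ hπ'
    (LinearMap.exact_subtype_ker_map g) hg ((LinearMap.lTensor_inj_iff_rTensor_inj _ _).1 hinj)
    (Module.Flat.lTensor_preserves_injective_linearMap _ g.ker.injective_subtype)

theorem lTensor_injective_of_isZero_tor_of_flat {C S : Type u} [AddCommGroup C] [Module R C]
    [CommRing S] [Algebra R S]
    (hTor : IsZero (((Tor (ModuleCat.{u} R) 1).obj (.of R C)).obj (.of R S)))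
    {L M V : Type*} [AddCommGroup L] [Module R L] [AddCommGroup M] [Module R M]
    [AddCommGroup V] [Module R V] [Module S V] [IsScalarTower R S V] [Module.Flat S V]
    {i : L →ₗ[R] M} {q : M →ₗ[R] V} (hi : Injective i) (hiq : Exact i q) (hq : Surjective q) :
    Injective (i.lTensor C) := by
  obtain ⟨Q, _, _, _, g, hg⟩ : ∃ (Q : Type u) (_ : AddCommGroup Q) (_ : Module R Q)
      (_ : Module.Flat R Q) (g : Q →ₗ[R] C), Surjective g :=
    ⟨C →₀ R, _, _, inferInstance, _, Finsupp.linearCombination_id_surjective R C⟩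
  have hgS : Injective (g.ker.subtype.lTensor S) :=
    lTensor_ker_subtype_injective_of_isZero_tor hTor hg
  have hgV : Injective (g.ker.subtype.rTensor V) :=
    (LinearMap.lTensor_inj_iff_rTensor_inj V g.ker.subtype).1
      (lTensor_injective_of_flat_of_lTensor_algebra_injective hgS)
  exact lTensor_injective_of_exact_of_exact_of_rTensor_injective
    (LinearMap.exact_subtype_ker_map g) hg hiq hq hgV
    (Module.Flat.lTensor_preserves_injective_linearMap _ hi)

variable {𝔪 : Ideal R} [𝔪.IsMaximal] {C : Type u} [AddCommGroup C] [Module R C]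
  (hTor : IsZero (((Tor (ModuleCat.{u} R) 1).obj (.of R C)).obj (.of R (R ⧸ 𝔪))))

include hTor

theorem rTensor_inclusion_injective_of_isZero_tor {M : Type*} [AddCommGroup M] [Module R M]
    {N N' : Submodule R M} (hle : N ≤ N') (h𝔪 : 𝔪 • N' ≤ N) :
    Injective ((Submodule.inclusion hle).rTensor C) := by
  have hV : Module.IsTorsionBySet R (N' ⧸ (Submodule.inclusion hle).range) 𝔪 := by
    rw [Module.isTorsionBySet_quotient_iff]
    exact fun x a ha ↦ ⟨⟨a • x, h𝔪 (Submodule.smul_mem_smul ha x.2)⟩, rfl⟩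
  let := hV.module
  let := Ideal.Quotient.field 𝔪
  rw [← LinearMap.lTensor_inj_iff_rTensor_inj]
  exact lTensor_injective_of_isZero_tor_of_flat hTor (Submodule.inclusion_injective hle)
    (LinearMap.exact_map_mkQ_range _) (Submodule.mkQ_surjective _)

theorem rTensor_subtype_injective_of_isZero_tor_of_pow_le {n : ℕ} {J : Ideal R} (hJ : 𝔪 ^ n ≤ J) :
    Injective (J.subtype.rTensor C) := by
  induction n generalizing J with
  | zero =>
    obtain rfl : J = ⊤ := by simpa using hJ
    exact (LinearEquiv.rTensor C (Submodule.topEquiv (R := R) (M := R))).injective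
  | succ n ih =>
    have hle : J ≤ J ⊔ 𝔪 ^ n := le_sup_left
    have h𝔪 : 𝔪 • (J ⊔ 𝔪 ^ n) ≤ J := by
      rw [smul_eq_mul, Ideal.mul_sup, ← pow_succ']
      exact sup_le Ideal.mul_le_right hJ
    rw [← Submodule.subtype_comp_inclusion _ _ hle, LinearMap.rTensor_comp, LinearMap.coe_comp]
    exact (ih le_sup_right).comp (rTensor_inclusion_injective_of_isZero_tor hTor hle h𝔪)

end Tor

theorem iInf_sup_pow_smul_top_eq {R M : Type*} [CommRing R] [AddCommGroup M]
    [Module R M] (𝔞 : Ideal R) (N : Submodule R M) [IsHausdorff 𝔞 (M ⧸ N)] :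
    ⨅ n, N ⊔ 𝔞 ^ n • (⊤ : Submodule R M) = N := by
  refine le_antisymm (fun x hx ↦ ?_) (le_iInf fun n ↦ le_sup_left)
  refine (Submodule.Quotient.mk_eq_zero N).1 (IsHausdorff.haus' (I := 𝔞) _ fun n ↦ ?_)
  have hmap : (N ⊔ 𝔞 ^ n • ⊤).map N.mkQ = 𝔞 ^ n • ⊤ := by
    simp [Submodule.map_sup, Submodule.map_smul'']
  rw [SModEq.zero, ← hmap]
  exact Submodule.mem_map_of_mem ((Submodule.mem_iInf _).1 hx n)

theorem le_of_isMaximal_of_pow_le {R : Type*} [CommRing R] {𝔪 : Ideal R} [h𝔪 : 𝔪.IsMaximal]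
    {J : Ideal R} {n : ℕ} (hn : 𝔪 ^ n ≤ J) (hJ : J ≠ ⊤) : J ≤ 𝔪 := by
  obtain ⟨M, hM, hJM⟩ := J.exists_le_maximal hJ
  rwa [h𝔪.eq_of_le hM.ne_top (hM.isPrime.le_of_pow_le (hn.trans hJM))]

theorem le_colon_smul_top {R C : Type*} [CommRing R] [AddCommGroup C] [Module R C] (I : Ideal R) :
    I ≤ (I • (⊤ : Submodule R C)).colon ⊤ :=
  fun _ hr ↦ Submodule.mem_colon.2 fun _ _ ↦ Submodule.smul_mem_smul hr trivial

section Colon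

variable {R : Type u} [CommRing R] {𝔪 : Ideal R} [𝔪.IsMaximal]
  {C : Type u} [AddCommGroup C] [Module R C] (h𝔪C : 𝔪 • (⊤ : Submodule R C) ≠ ⊤)
  (hTor : IsZero (((Tor (ModuleCat.{u} R) 1).obj (.of R C)).obj (.of R (R ⧸ 𝔪))))

include h𝔪C hTor

theorem colon_smul_top_eq_of_pow_le {n : ℕ} {I : Ideal R} (hn : 𝔪 ^ n ≤ I) :
    (I • (⊤ : Submodule R C)).colon ⊤ = I := by
  refine le_antisymm (fun r hr ↦ ?_) (le_colon_smul_top I)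
  have hcolon : I.colon {r} • (⊤ : Submodule R C) = ⊤ :=
    eq_top_iff.2 fun c _ ↦ mem_colon_singleton_smul_top_of_rTensor_injective
      (rTensor_subtype_injective_of_isZero_tor_of_pow_le hTor (hn.trans le_sup_left))
      (Submodule.mem_colon.1 hr c trivial)
  have htop : I.colon {r} = ⊤ := by
    by_contra hne
    have hle : I.colon {r} ≤ 𝔪 := le_of_isMaximal_of_pow_le (hn.trans Ideal.le_colon) hne
    exact h𝔪C (top_unique (hcolon.ge.trans (Submodule.smul_mono_left hle)))
  simpa using (Ideal.eq_top_iff_one _).1 htop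

theorem conductor_eq_of_tor_vanishing_general (I : Ideal R) [IsHausdorff 𝔪 (R ⧸ I)] :
    (I • (⊤ : Submodule R C)).colon ⊤ = I := by
  refine le_antisymm ?_ (le_colon_smul_top I)
  calc (I • (⊤ : Submodule R C)).colon ⊤
      ≤ ⨅ n, ((I ⊔ 𝔪 ^ n) • (⊤ : Submodule R C)).colon ⊤ :=
        le_iInf fun n ↦ Submodule.colon_mono (Submodule.smul_mono_left le_sup_left) le_rfl
    _ = ⨅ n, I ⊔ 𝔪 ^ n := by simp only [colon_smul_top_eq_of_pow_le h𝔪C hTor le_sup_right]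
    _ = I := by simpa using iInf_sup_pow_smul_top_eq 𝔪 I

end Colon

/-- If `(A, m, k)` is a noetherian local ring and `C` an `A`-module with `mC ≠ C` and
`Tor_1^A(C, k) = 0`, then for every ideal `I` the conductor `(IC :_A C)` equals `I`. -/
theorem conductor_eq_of_tor_vanishing
    (A : Type) [CommRing A] [IsLocalRing A] [IsNoetherianRing A]
    (C : Type) [AddCommGroup C] [Module A C]
    (hmC : maximalIdeal A • (⊤ : Submodule A C) ≠ ⊤)
    (hTor : TorIsZero A 1 C (ResidueField A))
    (I : Ideal A) :
    (I • (⊤ : Submodule A C)).colon ⊤ = I :=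
  conductor_eq_of_tor_vanishing_general hmC hTor I
end

section
/- Let (A, m, k) be an artinian commutative local ring and C an A-module (not necessarily finitely generated). If Tor_1^A(C, k) = 0, then C is a free A-module. -/
open CategoryTheory Limits IsLocalRing

/-!
The maximal ideal matters only as a nilpotent ideal `I` with `C ⧸ I • C` free over `R ⧸ I`. Lift a
basis of `C ⧸ I • C` to a family in `C`, and let `K` be the kernel of the resulting map `i : F → C`
from a free module. By Nakayama's lemma, which for a nilpotent ideal holds without finiteness
assumptions, `i` is surjective. Since `Tor₁(C, R ⧸ I) = 0`, the map `K ⧸ I • K → F ⧸ I • F` is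
injective; its image is killed by the isomorphism `F ⧸ I • F → C ⧸ I • C`, so `K = I • K`, and
`K = 0` by Nakayama's lemma again.
-/

open scoped TensorProduct

universe u

section Nakayama

theorem le_of_le_sup_smul_of_isNilpotent {R M : Type*} [CommSemiring R] [AddCommMonoid M]
    [Module R M]
    {I : Ideal R} (hI : IsNilpotent I) {N N' : Submodule R M} (h : N' ≤ N ⊔ I • N') : N' ≤ N := by
  have le_sup_pow_smul (n : ℕ) : N' ≤ N ⊔ I ^ n • N' := by
    induction n with
    | zero => simp
    | succ n ih =>
      calc N' ≤ N ⊔ I ^ n • N' := ih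
        _ ≤ N ⊔ I ^ n • (N ⊔ I • N') := by gcongr
        _ = N ⊔ I ^ n • N ⊔ I ^ (n + 1) • N' := by
          rw [Submodule.smul_sup, pow_succ, Submodule.mul_smul, sup_assoc]
        _ = N ⊔ I ^ (n + 1) • N' := by
          rw [sup_eq_left.mpr (Submodule.smul_le_right : I ^ n • N ≤ N)]
  obtain ⟨n, hn⟩ := hI
  simpa [hn] using le_sup_pow_smul n

variable {R M : Type*} [CommRing R] [AddCommGroup M] [Module R M] {I : Ideal R}

theorem eq_top_of_map_tensorProductMk_eq_top (hI : IsNilpotent I) {N : Submodule R M}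
    (h : N.map (TensorProduct.mk R (R ⧸ I) M 1) = ⊤) : N = ⊤ := by
  have sup_smul_eq_top : N ⊔ I • ⊤ = ⊤ := by
    rw [← LinearMap.ker_tensorProductMk, ← Submodule.comap_map_eq, h, Submodule.comap_top]
  exact top_le_iff.mp (le_of_le_sup_smul_of_isNilpotent hI sup_smul_eq_top.ge)

theorem subsingleton_of_subsingleton_quotient_tensorProduct (hI : IsNilpotent I)
    [Subsingleton ((R ⧸ I) ⊗[R] M)] : Subsingleton M := by
  rw [← Submodule.subsingleton_iff R, ← subsingleton_iff_bot_eq_top]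
  exact eq_top_of_map_tensorProductMk_eq_top hI (Subsingleton.elim _ _)

theorem span_range_eq_top_of_span_range_tmul_eq_top (hI : IsNilpotent I) {ι : Type*} {v : ι → M}
    (h : Submodule.span (R ⧸ I) (Set.range fun j ↦ (1 : R ⧸ I) ⊗ₜ[R] v j) = ⊤) :
    Submodule.span R (Set.range v) = ⊤ := by
  apply eq_top_of_map_tensorProductMk_eq_top hI
  rw [Submodule.map_span, ← Set.range_comp,
    ← Submodule.restrictScalars_span R (R ⧸ I) Ideal.Quotient.mk_surjective]
  exact (Submodule.restrictScalars_eq_top_iff R _ _).mpr h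

end Nakayama

section LinearIndependent

variable {R M ι : Type*} [CommRing R] [AddCommGroup M] [Module R M] {v : ι → M}

theorem baseChange_linearCombination_injective {S : Type*} [CommRing S] [Algebra R S]
    (h : LinearIndependent S fun j ↦ (1 : S) ⊗ₜ[R] v j) :
    Function.Injective ((Finsupp.linearCombination R v).baseChange S) := by
  let b : Module.Basis ι S (S ⊗[R] (ι →₀ R)) := Finsupp.basisSingleOne.baseChange S
  have baseChange_eq : (Finsupp.linearCombination R v).baseChange S =
      Finsupp.linearCombination S (fun j ↦ (1 : S) ⊗ₜ[R] v j) ∘ₗ b.repr :=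
    b.ext fun j ↦ by
      rw [LinearMap.comp_apply, LinearEquiv.coe_coe, b.repr_self]
      simp [b]
  rw [baseChange_eq, LinearMap.coe_comp]
  exact Function.Injective.comp h b.repr.injective

theorem linearIndependent_of_lTensor_ker_injective {I : Ideal R} (hI : IsNilpotent I)
    (h : LinearIndependent (R ⧸ I) fun j ↦ (1 : R ⧸ I) ⊗ₜ[R] v j)
    (hker : Function.Injective
      ((Finsupp.linearCombination R v).ker.subtype.lTensor (R ⧸ I))) :
    LinearIndependent R v := by
  let i := Finsupp.linearCombination R v
  have lTensor_comp_eq_zero : i.lTensor (R ⧸ I) ∘ₗ i.ker.subtype.lTensor (R ⧸ I) = 0 := by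
    rw [← LinearMap.lTensor_comp, i.comp_ker_subtype, LinearMap.lTensor_zero]
  have lTensor_injective : Function.Injective (i.lTensor (R ⧸ I)) :=
    baseChange_linearCombination_injective h
  have : Subsingleton ((R ⧸ I) ⊗[R] i.ker) := subsingleton_of_forall_eq 0 fun x ↦ by
    apply hker
    apply lTensor_injective
    rw [map_zero, map_zero]
    exact LinearMap.congr_fun lTensor_comp_eq_zero x
  have : Subsingleton i.ker := subsingleton_of_subsingleton_quotient_tensorProduct hI
  exact LinearMap.ker_eq_bot.mp ((Submodule.subsingleton_iff_eq_bot).mp this)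

end LinearIndependent

section Tor

theorem lTensor_range_subtype_injective {R C X₀ X₁ X₂ : Type*} [CommRing R]
    [AddCommGroup C] [Module R C] [AddCommGroup X₀] [Module R X₀] [AddCommGroup X₁] [Module R X₁]
    [AddCommGroup X₂] [Module R X₂] {d₂ : X₂ →ₗ[R] X₁} {d₁ : X₁ →ₗ[R] X₀} (hd : d₁ ∘ₗ d₂ = 0)
    (h : Function.Exact (d₂.lTensor C) (d₁.lTensor C)) :
    Function.Injective (d₁.range.subtype.lTensor C) := by
  rw [injective_iff_map_eq_zero]
  intro x hx
  obtain ⟨y, rfl⟩ := LinearMap.lTensor_surjective C d₁.surjective_rangeRestrict x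
  rw [← LinearMap.lTensor_comp_apply, d₁.subtype_comp_codRestrict] at hx
  obtain ⟨z, rfl⟩ := (h y).mp hx
  have rangeRestrict_comp_eq_zero : d₁.rangeRestrict ∘ₗ d₂ = 0 :=
    LinearMap.ext fun w ↦ Subtype.ext (LinearMap.congr_fun hd w)
  rw [← LinearMap.lTensor_comp_apply, rangeRestrict_comp_eq_zero, LinearMap.lTensor_zero,
    LinearMap.zero_apply]

variable {R C D : Type u} [CommRing R] [AddCommGroup C] [Module R C] [AddCommGroup D] [Module R D]

theorem exact_lTensor_of_isZero_tor_one
    (h : IsZero (((Tor (ModuleCat.{u} R) 1).obj (.of R C)).obj (.of R D)))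
    (P : ProjectiveResolution (ModuleCat.of R D)) :
    Function.Exact ((P.complex.d 2 1).hom.lTensor C) ((P.complex.d 1 0).hom.lTensor C) := by
  let T := (MonoidalCategory.tensoringLeft (ModuleCat.{u} R)).obj (.of R C)
  have isZero_homology : IsZero (((T.mapHomologicalComplex _).obj P.complex).homology 1) :=
    h.of_iso (P.isoLeftDerivedObj T 1).symm
  rw [← HomologicalComplex.exactAt_iff_isZero_homology,
    HomologicalComplex.exactAt_iff' _ 2 1 0 (by simp) (by simp)] at isZero_homology
  exact (ShortComplex.ShortExact.moduleCat_exact_iff_function_exact _).mp isZero_homology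

theorem exists_projective_lTensor_ker_injective_of_isZero_tor_one
    (h : IsZero (((Tor (ModuleCat.{u} R) 1).obj (.of R C)).obj (.of R D))) :
    ∃ (P : ModuleCat.{u} R) (p : P →ₗ[R] D), Module.Projective R P ∧ Function.Surjective p ∧
      Function.Injective (p.ker.subtype.lTensor C) := by
  let P := ProjectiveResolution.of (ModuleCat.of R D)
  let p : P.complex.X 0 →ₗ[R] D := (P.π.f 0).hom
  have exact_p : Function.Exact (P.complex.d 1 0).hom p :=
    (ShortComplex.ShortExact.moduleCat_exact_iff_function_exact _).mp P.exact₀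
  refine ⟨P.complex.X 0, p, (IsProjective.iff_projective _).mpr (P.projective 0),
    (ModuleCat.epi_iff_surjective (P.π.f 0)).mp inferInstance, ?_⟩
  rw [exact_p.linearMap_ker_eq]
  exact lTensor_range_subtype_injective
    (congrArg ModuleCat.Hom.hom (P.complex.d_comp_d 2 1 0)) (exact_lTensor_of_isZero_tor_one h P)

/-- `Tor` is derived in its second variable, so its vanishing is read off a presentation of `D`;
balancing against that presentation transfers it to a presentation of `C`. -/
theorem lTensor_injective_of_isZero_tor_one
    (h : IsZero (((Tor (ModuleCat.{u} R) 1).obj (.of R C)).obj (.of R D)))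
    {K F : Type*} [AddCommGroup K] [Module R K] [AddCommGroup F] [Module R F] [Module.Flat R F]
    {f : K →ₗ[R] F} {g : F →ₗ[R] C} (hf : Function.Injective f) (hfg : Function.Exact f g)
    (hg : Function.Surjective g) : Function.Injective (f.lTensor D) := by
  obtain ⟨P, p, _, hp, hker⟩ := exists_projective_lTensor_ker_injective_of_isZero_tor_one h
  exact lTensor_injective_of_exact_of_exact_of_rTensor_injective
    p.exact_subtype_ker_map hp hfg hg ((LinearMap.lTensor_inj_iff_rTensor_inj _ _).mp hker)
    (Module.Flat.lTensor_preserves_injective_linearMap f hf)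

end Tor

theorem free_of_tor_vanishing_artinian_general {R : Type u} [CommRing R] {I : Ideal R}
    (hI : IsNilpotent I) (C : Type u) [AddCommGroup C] [Module R C]
    [Module.Free (R ⧸ I) ((R ⧸ I) ⊗[R] C)]
    (hTor : IsZero (((Tor (ModuleCat.{u} R) 1).obj (.of R C)).obj (.of R (R ⧸ I)))) :
    Module.Free R C := by
  obtain ⟨⟨ι, b⟩⟩ := Module.Free.exists_basis (R := R ⧸ I) (M := (R ⧸ I) ⊗[R] C)
  choose v hv using fun j ↦
    TensorProduct.mk_surjective R C (R ⧸ I) Ideal.Quotient.mk_surjective (b j)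
  have coe_b : ⇑b = fun j ↦ (1 : R ⧸ I) ⊗ₜ[R] v j := funext fun j ↦ (hv j).symm
  have span_eq_top : Submodule.span R (Set.range v) = ⊤ :=
    span_range_eq_top_of_span_range_tmul_eq_top hI (coe_b ▸ b.span_eq)
  have surjective : Function.Surjective (Finsupp.linearCombination R v) := by
    rw [← LinearMap.range_eq_top, Finsupp.range_linearCombination, span_eq_top]
  have linearIndependent : LinearIndependent R v :=
    linearIndependent_of_lTensor_ker_injective hI (coe_b ▸ b.linearIndependent)
      (lTensor_injective_of_isZero_tor_one hTor Subtype.val_injective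
        (LinearMap.exact_subtype_ker_map _) surjective)
  exact .of_basis (.mk linearIndependent span_eq_top.ge)

/-- Over an artinian local ring, a module with `Tor_1^A(C, k) = 0` is free. -/
theorem free_of_tor_vanishing_artinian
    (A : Type) [CommRing A] [IsLocalRing A] [IsArtinianRing A]
    (C : Type) [AddCommGroup C] [Module A C]
    (hTor : TorIsZero A 1 C (ResidueField A)) :
    Module.Free A C :=
  have : Module.Free (A ⧸ maximalIdeal A) ((A ⧸ maximalIdeal A) ⊗[A] C) :=
    inferInstanceAs (Module.Free (ResidueField A) (ResidueField A ⊗[A] C))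
  free_of_tor_vanishing_artinian_general
    ((isArtinianRing_iff_isNilpotent_maximalIdeal A).mp inferInstance) C hTor
end
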